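/- For every p ∈ (1,∞) there exists c_p ∈ (0,∞) such that for every n,d,m ∈ ℕ with d + m ≤ n and every function f : {-1,1}^n → ℂ of degree at most d + m which is also in the d-th tail space, ‖∇f‖_{L_p} ≥ c_p · √(d/m) · ‖f‖_{L_p}. -/

import Mathlib

open scoped BigOperators ENNReal NNReal

noncomputable section

namespace HammingCube

variable {X : Type*} [NormedAddCommGroup X] [NormedSpace ℂ X]

/-- The sign ±1 associated to a boolean coordinate. -/
def sgn (b : Bool) : ℝ := if b then 1 else -1

/-- The Walsh function `w_A(ε) = ∏_{i ∈ A} ε_i`. -/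
def walsh {n : ℕ} (A : Finset (Fin n)) (ε : Fin n → Bool) : ℝ := ∏ i ∈ A, sgn (ε i)

/-- The Fourier–Walsh coefficient `f̂(A) = 2⁻ⁿ ∑_δ f(δ) w_A(δ)`. -/
def coeff {n : ℕ} (f : (Fin n → Bool) → X) (A : Finset (Fin n)) : X :=
  (2 ^ n : ℝ)⁻¹ • ∑ δ : Fin n → Bool, walsh A δ • f δ

/-- `f` has degree at most `d`: `f̂(A) = 0` whenever `|A| > d`. -/
def degLE {n : ℕ} (f : (Fin n → Bool) → X) (d : ℕ) : Prop :=
  ∀ A : Finset (Fin n), d < A.card → coeff f A = 0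

/-- `f` belongs to the `d`-th tail space: `f̂(A) = 0` whenever `|A| < d`. -/
def tailSpace {n : ℕ} (f : (Fin n → Bool) → X) (d : ℕ) : Prop :=
  ∀ A : Finset (Fin n), A.card < d → coeff f A = 0

/-- The heat semigroup `e^{-tΔ} f = ∑_A e^{-t|A|} f̂(A) w_A`. -/
def heat {n : ℕ} (t : ℝ) (f : (Fin n → Bool) → X) : (Fin n → Bool) → X :=
  fun ε => ∑ A : Finset (Fin n), Real.exp (-t * A.card) • walsh A ε • coeff f A

/-- The hypercube Laplacian `Δ f = ∑_A |A| f̂(A) w_A`. -/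
def lap {n : ℕ} (f : (Fin n → Bool) → X) : (Fin n → Bool) → X :=
  fun ε => ∑ A : Finset (Fin n), (A.card : ℝ) • walsh A ε • coeff f A

/-- The fractional Laplacian `Δ^γ f = ∑_A |A|^γ f̂(A) w_A`. -/
def fracLap {n : ℕ} (γ : ℝ) (f : (Fin n → Bool) → X) : (Fin n → Bool) → X :=
  fun ε => ∑ A : Finset (Fin n), ((A.card : ℝ) ^ γ) • walsh A ε • coeff f A

/-- The `i`-th discrete partial derivative. -/
def pderiv {n : ℕ} (i : Fin n) (f : (Fin n → Bool) → X) : (Fin n → Bool) → X :=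
  fun ε => (2 : ℝ)⁻¹ • (f ε - f (Function.update ε i (!(ε i))))

/-- The vector-valued `L_p` norm `(2⁻ⁿ ∑_ε ‖f(ε)‖^p)^{1/p}` for finite `p`. -/
def lpNorm {n : ℕ} {Y : Type*} [NormedAddCommGroup Y] (p : ℝ)
    (f : (Fin n → Bool) → Y) : ℝ :=
  ((2 ^ n : ℝ)⁻¹ * ∑ ε : Fin n → Bool, ‖f ε‖ ^ p) ^ (1 / p)

/-- The `L_∞` norm `max_ε ‖f(ε)‖`. -/
def linfNorm {n : ℕ} {Y : Type*} [NormedAddCommGroup Y]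
    (f : (Fin n → Bool) → Y) : ℝ :=
  ⨆ ε : Fin n → Bool, ‖f ε‖

/-- The `L_p` norm for `p ∈ [1,∞]` encoded as `p : ℝ≥0∞`. -/
def lpNormE {n : ℕ} {Y : Type*} [NormedAddCommGroup Y] (p : ℝ≥0∞)
    (f : (Fin n → Bool) → Y) : ℝ :=
  if p = ⊤ then linfNorm f else lpNorm p.toReal f

/-- The scalar `L_p` norm of the gradient `‖(∑_i |∂_i f|²)^{1/2}‖_{L_p}`. -/
def gradLpNorm {n : ℕ} (p : ℝ) (f : (Fin n → Bool) → ℂ) : ℝ :=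
  lpNorm p (fun ε => Real.sqrt (∑ i : Fin n, ‖pderiv i f ε‖ ^ 2))

/-- The Rademacher projection `Rad f(ε) = ∑_i f̂({i}) ε_i`. -/
def Rad {n : ℕ} (f : (Fin n → Bool) → X) : (Fin n → Bool) → X :=
  fun ε => ∑ i : Fin n, sgn (ε i) • coeff f {i}

/-- A complex Banach space is `K`-convex if the Rademacher projections are uniformly
bounded on `L_q` for some `q ∈ (1,∞)`. -/
def KConvex (X : Type*) [NormedAddCommGroup X] [NormedSpace ℂ X] : Prop :=
  ∃ q : ℝ, 1 < q ∧ ∃ M : ℝ, ∀ (n : ℕ) (f : (Fin n → Bool) → X),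
    lpNorm q (Rad f) ≤ M * lpNorm q f

/-- `X` has cotype `q` with constant `C`. -/
def HasCotype (X : Type*) [NormedAddCommGroup X] [NormedSpace ℂ X] (q C : ℝ) : Prop :=
  ∀ (n : ℕ) (x : Fin n → X),
    C⁻¹ * (∑ i : Fin n, ‖x i‖ ^ q) ^ (1 / q) ≤
      ((2 ^ n : ℝ)⁻¹ * ∑ ε : Fin n → Bool, ‖∑ i : Fin n, sgn (ε i) • x i‖ ^ q) ^ (1 / q)

/-- The entropy `Ent(h)` of a nonnegative function on the cube. -/
def entropy {n : ℕ} (h : (Fin n → Bool) → ℝ) : ℝ :=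
  (2 ^ n : ℝ)⁻¹ * ∑ ε : Fin n → Bool, h ε * Real.log (h ε) -
    ((2 ^ n : ℝ)⁻¹ * ∑ ε : Fin n → Bool, h ε) *
      Real.log ((2 ^ n : ℝ)⁻¹ * ∑ ε : Fin n → Bool, h ε)

/-- The `L_∞` norm of the gradient `max_ε (∑_i |∂_i f(ε)|²)^{1/2}`. -/
def gradLinfNorm {n : ℕ} (f : (Fin n → Bool) → ℂ) : ℝ :=
  ⨆ ε : Fin n → Bool, Real.sqrt (∑ i : Fin n, ‖pderiv i f ε‖ ^ 2)

/-!
Let `T_ρ` be the noise operator and `J f = ‖f‖ ^ (p - 2) f` the function dual to `f` in `L_p`. The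
pairing `h(ρ) = 𝔼 ⟪J f, T_ρ f⟫` equals `‖f‖_p ^ p` at `ρ = 1`, is at most `‖f‖_p ^ p` in absolute
value on `[0, 1]`, and, as the spectrum of `f` lies in `[d, d + m]`, has the form `ρ ^ d * Q(ρ)`
with `deg Q ≤ m`. Chebyshev's extrapolation inequality for `Q` then forces `h` to drop to half of
`‖f‖_p ^ p` already at `ρ = exp (-t)` with `t` of order `m / d`.

Along the flow `ρ = exp (-t)` the derivative of `h` is minus the Dirichlet form of `J f` and
`T_ρ f`, so it remains to bound this form by the gradient of `f`. For `p ≤ 2` the semigroup is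
moved onto `J f`, where `√(2 t) ‖∇ T_ρ g‖_q ≤ ‖g‖_q` for `q ≥ 2`; the singularity `1 / √t` is
integrable. For `p > 2` the Lipschitz estimate for `z ↦ ‖z‖ ^ (p - 2) z` and Hölder's inequality
give the bound `2 p ‖f‖_p ^ (p - 2) ‖∇ f‖_p ^ 2`.
-/

section Extrapolation

open scoped Polynomial

lemma eval_chebyshev_T_le_pow (m : ℕ) {x : ℝ} (hx : 1 ≤ x) :
    (Polynomial.Chebyshev.T ℝ m).eval x ≤ (2 * x) ^ m := by
  obtain ⟨θ, hθ, rfl⟩ : ∃ θ, 0 ≤ θ ∧ Real.cosh θ = x :=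
    ⟨Real.arcosh x, Real.arcosh_nonneg hx, Real.cosh_arcosh hx⟩
  have exp_le : Real.exp θ ≤ 2 * Real.cosh θ := by
    rw [Real.cosh_eq]
    linarith [Real.exp_pos (-θ)]
  have cosh_le {u : ℝ} (hu : 0 ≤ u) : Real.cosh u ≤ Real.exp u := by
    rw [Real.cosh_eq]
    linarith [Real.exp_le_exp.2 (by linarith : -u ≤ u)]
  calc (Polynomial.Chebyshev.T ℝ m).eval (Real.cosh θ) = Real.cosh (m * θ) :=
        mod_cast Polynomial.Chebyshev.T_real_cosh θ m
    _ ≤ Real.exp (m * θ) := cosh_le (by positivity)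
    _ = Real.exp θ ^ m := Real.exp_nat_mul θ m
    _ ≤ (2 * Real.cosh θ) ^ m := by gcongr

lemma eval_le_of_forall_abs_eval_le_one {m : ℕ} {P : ℝ[X]} (hP : P.natDegree ≤ m)
    (hbound : ∀ x ∈ Set.Icc (-1) 1, |P.eval x| ≤ 1) {x : ℝ} (hx : 1 ≤ x) :
    P.eval x ≤ (2 * x) ^ m :=
  (Polynomial.Chebyshev.eval_iterate_derivative_le_of_forall_abs_le_one (k := 0) hx
    (Polynomial.degree_le_of_natDegree_le hP) hbound).trans (eval_chebyshev_T_le_pow m hx)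

lemma abs_eval_le_of_forall_abs_eval_le {m : ℕ} {P : ℝ[X]} (hP : P.natDegree ≤ m) {B : ℝ}
    (hB : 0 < B) (hbound : ∀ x ∈ Set.Icc (-1) 1, |P.eval x| ≤ B) {x : ℝ} (hx : 1 ≤ x) :
    |P.eval x| ≤ B * (2 * x) ^ m := by
  have eval_le {c : ℝ} (hc : |c| = B⁻¹) : c * P.eval x ≤ (2 * x) ^ m := by
    rw [← Polynomial.eval_C_mul]
    refine eval_le_of_forall_abs_eval_le_one ((Polynomial.natDegree_C_mul_le c P).trans hP)
      (fun y hy => ?_) hx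
    rw [Polynomial.eval_C_mul, abs_mul, hc, inv_mul_le_one₀ hB]
    exact hbound y hy
  have hinv : |B⁻¹| = B⁻¹ := abs_of_pos (inv_pos.2 hB)
  rw [← inv_mul_le_iff₀ hB, ← hinv, ← abs_mul]
  refine abs_le'.2 ⟨eval_le hinv, ?_⟩
  rw [← neg_mul]
  exact eval_le (by rw [abs_neg, hinv])

lemma abs_eval_le_of_forall_abs_eval_le_Icc {m : ℕ} {P : ℝ[X]} (hP : P.natDegree ≤ m)
    {a b B : ℝ} (hab : a < b) (hB : 0 < B) (hbound : ∀ x ∈ Set.Icc a b, |P.eval x| ≤ B) {x : ℝ}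
    (hx : x ≤ a) : |P.eval x| ≤ B * (2 * ((a + b - 2 * x) / (b - a))) ^ m := by
  have hba : 0 < b - a := sub_pos.2 hab
  let L : ℝ[X] := Polynomial.C (-((b - a) / 2)) * Polynomial.X + Polynomial.C ((a + b) / 2)
  have eval_L (s : ℝ) : L.eval s = (a + b) / 2 - s * ((b - a) / 2) := by
    simp only [L, Polynomial.eval_add, Polynomial.eval_mul, Polynomial.eval_C, Polynomial.eval_X]
    ring
  have hdeg : (P.comp L).natDegree ≤ m :=
    calc (P.comp L).natDegree = P.natDegree * L.natDegree := Polynomial.natDegree_comp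
      _ ≤ m * 1 := Nat.mul_le_mul hP Polynomial.natDegree_linear_le
      _ = m := mul_one m
  have hcomp : ∀ s ∈ Set.Icc (-1) 1, |(P.comp L).eval s| ≤ B := by
    rintro s ⟨hs1, hs2⟩
    rw [Polynomial.eval_comp, eval_L]
    refine hbound _ ⟨?_, ?_⟩ <;> nlinarith
  have hx1 : 1 ≤ (a + b - 2 * x) / (b - a) := by
    rw [one_le_div hba]
    linarith
  have h := abs_eval_le_of_forall_abs_eval_le hdeg hB hcomp hx1
  rwa [Polynomial.eval_comp, eval_L,
    show (a + b) / 2 - (a + b - 2 * x) / (b - a) * ((b - a) / 2) = x by field_simp; ring] at h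

/- On `[a, 1]` the hypothesis gives `|Q| ≤ B / a ^ d`; extrapolating from there to `a ^ k` costs
`(4 * k) ^ m`, since `1 - a ^ k ≤ k * (1 - a)`, but gains the factor `(a ^ k) ^ d`. -/
lemma abs_pow_mul_eval_pow_le {d m k : ℕ} {Q : ℝ[X]} (hQ : Q.natDegree ≤ m) {B : ℝ} (hB : 0 < B)
    (hbound : ∀ ρ ∈ Set.Icc (0 : ℝ) 1, |ρ ^ d * Q.eval ρ| ≤ B) {a : ℝ} (ha0 : 0 < a) (ha1 : a < 1)
    (hk : 1 ≤ k) :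
    |(a ^ k) ^ d * Q.eval (a ^ k)| ≤ B * ((a ^ d) ^ (k - 1) * (4 * k) ^ m) := by
  have had : 0 < a ^ d := by positivity
  have hba : 0 < 1 - a := sub_pos.2 ha1
  have hbound' : ∀ ρ ∈ Set.Icc a 1, |Q.eval ρ| ≤ B / a ^ d := by
    rintro ρ ⟨hρa, hρ1⟩
    have hρ0 : 0 ≤ ρ := ha0.le.trans hρa
    have h := hbound ρ ⟨hρ0, hρ1⟩
    rw [abs_mul, abs_of_nonneg (pow_nonneg hρ0 d)] at h
    rw [le_div_iff₀' had]
    refine le_trans ?_ h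
    gcongr
  have hak : a ^ k ≤ a := pow_le_of_le_one ha0.le ha1.le (by lia)
  have bernoulli : 1 - a ^ k ≤ k * (1 - a) := by
    linarith [one_add_mul_sub_le_pow (by linarith : -1 ≤ a) k]
  have hratio : (a + 1 - 2 * a ^ k) / (1 - a) ≤ 2 * k := by
    rw [div_le_iff₀ hba]
    linarith
  have hratio0 : 0 ≤ (a + 1 - 2 * a ^ k) / (1 - a) := div_nonneg (by linarith) hba.le
  rw [abs_mul, abs_of_nonneg (by positivity)]
  calc (a ^ k) ^ d * |Q.eval (a ^ k)|
      ≤ (a ^ k) ^ d * (B / a ^ d * (2 * ((a + 1 - 2 * a ^ k) / (1 - a))) ^ m) := by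
        gcongr
        exact abs_eval_le_of_forall_abs_eval_le_Icc hQ ha1 (by positivity) hbound' hak
    _ ≤ (a ^ k) ^ d * (B / a ^ d * (2 * (2 * k)) ^ m) := by gcongr
    _ = B * ((a ^ d) ^ (k - 1) * (4 * k) ^ m) := by
        rw [pow_right_comm, ← mul_pow_sub_one (by lia : k ≠ 0) (a ^ d)]
        field_simp
        ring

lemma abs_pow_mul_eval_exp_le_half {d m : ℕ} (hd : 1 ≤ d) (hm : 1 ≤ m) {Q : ℝ[X]}
    (hQ : Q.natDegree ≤ m) {B : ℝ} (hB : 0 < B)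
    (hbound : ∀ ρ ∈ Set.Icc (0 : ℝ) 1, |ρ ^ d * Q.eval ρ| ≤ B) :
    |Real.exp (-(5 * m / d)) ^ d * Q.eval (Real.exp (-(5 * m / d)))| ≤ B / 2 := by
  have : (0 : ℝ) < d := mod_cast hd
  have : (0 : ℝ) < m := mod_cast hm
  have hexp : Real.exp (-(5 * m / d)) = Real.exp (-(m / d)) ^ 5 := by
    rw [← Real.exp_nat_mul]
    congr 1
    push_cast
    ring
  have hpow : Real.exp (-(m / d)) ^ d = Real.exp (-1) ^ m := by
    rw [← Real.exp_nat_mul, ← Real.exp_nat_mul]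
    congr 1
    field_simp
  have hnum : Real.exp (-1) ^ 4 * 20 ≤ 1 / 2 := by
    have he : Real.exp (-1) ≤ 3 / 8 := by linarith [Real.exp_neg_one_lt_d9]
    calc Real.exp (-1) ^ 4 * 20 ≤ (3 / 8) ^ 4 * 20 := by gcongr
      _ ≤ 1 / 2 := by norm_num
  rw [hexp]
  refine (abs_pow_mul_eval_pow_le hQ hB hbound (Real.exp_pos _)
    (Real.exp_lt_one_iff.2 (neg_neg_of_pos (by positivity))) (by norm_num)).trans ?_
  calc B * ((Real.exp (-(m / d)) ^ d) ^ (5 - 1) * (4 * (5 : ℕ)) ^ m)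
      = B * (Real.exp (-1) ^ 4 * 20) ^ m := by
        rw [hpow, pow_right_comm, ← mul_pow]
        norm_num
    _ ≤ B * (1 / 2) := by
        gcongr
        exact (pow_le_of_le_one (by positivity) (by linarith) (by lia)).trans hnum
    _ = B / 2 := by ring

end Extrapolation

section LpNorm

variable {n : ℕ} {Y Z : Type*} [NormedAddCommGroup Y] [NormedAddCommGroup Z] {p q : ℝ}

lemma expect_mul_le_rpow_mul_rpow {ι : Type*} (s : Finset ι) (hpq : p.HolderConjugate q)
    {u v : ι → ℝ} (hu : ∀ i ∈ s, 0 ≤ u i) (hv : ∀ i ∈ s, 0 ≤ v i) :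
    𝔼 i ∈ s, u i * v i ≤ (𝔼 i ∈ s, u i ^ p) ^ (1 / p) * (𝔼 i ∈ s, v i ^ q) ^ (1 / q) := by
  simp_rw [Finset.expect_eq_sum_div_card]
  rw [Real.div_rpow (Finset.sum_nonneg fun i hi => Real.rpow_nonneg (hu i hi) p) (by positivity),
    Real.div_rpow (Finset.sum_nonneg fun i hi => Real.rpow_nonneg (hv i hi) q) (by positivity),
    div_mul_div_comm, one_div, one_div, ← Real.rpow_add' (by positivity) (by
      rw [hpq.inv_add_inv_eq_one]; exact one_ne_zero), hpq.inv_add_inv_eq_one, Real.rpow_one,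
    ← one_div, ← one_div]
  gcongr
  exact Real.inner_le_Lp_mul_Lq_of_nonneg s hpq hu hv

lemma lpNorm_eq_expect (p : ℝ) (f : (Fin n → Bool) → Y) :
    lpNorm p f = (𝔼 x, ‖f x‖ ^ p) ^ (1 / p) := by
  simp [lpNorm, Fintype.expect_eq_sum_div_card, div_eq_inv_mul]

lemma lpNorm_nonneg (p : ℝ) (f : (Fin n → Bool) → Y) : 0 ≤ lpNorm p f := by
  rw [lpNorm]
  positivity

lemma lpNorm_rpow (hp : p ≠ 0) (f : (Fin n → Bool) → Y) : lpNorm p f ^ p = 𝔼 x, ‖f x‖ ^ p := by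
  rw [lpNorm_eq_expect, ← Real.rpow_mul (Finset.expect_nonneg fun _ _ => by positivity),
    one_div_mul_cancel hp, Real.rpow_one]

lemma lpNorm_le_lpNorm_of_expect_le (hp : 0 ≤ p) {f : (Fin n → Bool) → Y}
    {g : (Fin n → Bool) → Z} (h : 𝔼 x, ‖f x‖ ^ p ≤ 𝔼 x, ‖g x‖ ^ p) : lpNorm p f ≤ lpNorm p g := by
  rw [lpNorm_eq_expect, lpNorm_eq_expect]
  have : 0 ≤ 𝔼 x, ‖f x‖ ^ p := Finset.expect_nonneg fun _ _ => by positivity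
  gcongr

lemma lpNorm_congr_norm {f : (Fin n → Bool) → Y} {g : (Fin n → Bool) → Z}
    (h : ∀ x, ‖f x‖ = ‖g x‖) (p : ℝ) : lpNorm p f = lpNorm p g := by
  simp only [lpNorm, h]

lemma lpNorm_smul [NormedSpace ℝ Y] (hp : p ≠ 0) (c : ℝ) (f : (Fin n → Bool) → Y) :
    lpNorm p (c • f) = |c| * lpNorm p f := by
  have hf : 0 ≤ 𝔼 x, ‖f x‖ ^ p := Finset.expect_nonneg fun _ _ => by positivity
  simp only [lpNorm_eq_expect, Pi.smul_apply, norm_smul, Real.norm_eq_abs]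
  simp_rw [Real.mul_rpow (abs_nonneg c) (norm_nonneg _)]
  rw [← Finset.mul_expect, Real.mul_rpow (by positivity) hf, ← Real.rpow_mul (abs_nonneg c),
    mul_one_div_cancel hp, Real.rpow_one]

lemma expect_norm_mul_norm_le (hpq : p.HolderConjugate q) (f : (Fin n → Bool) → Y)
    (g : (Fin n → Bool) → Z) : 𝔼 x, ‖f x‖ * ‖g x‖ ≤ lpNorm p f * lpNorm q g := by
  rw [lpNorm_eq_expect, lpNorm_eq_expect]
  exact expect_mul_le_rpow_mul_rpow _ hpq (fun _ _ => norm_nonneg _) (fun _ _ => norm_nonneg _)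

lemma expect_rpow_mul_sq_le (hp : 2 < p) (f : (Fin n → Bool) → Y) (g : (Fin n → Bool) → Z) :
    𝔼 x, ‖f x‖ ^ (p - 2) * ‖g x‖ ^ 2 ≤ lpNorm p f ^ (p - 2) * lpNorm p g ^ 2 := by
  have hconj : (p / (p - 2)).HolderConjugate (p / 2) := by
    rw [Real.holderConjugate_iff, one_lt_div (by linarith)]
    refine ⟨by linarith, ?_⟩
    field_simp
    ring
  have rpow_f (x) : (‖f x‖ ^ (p - 2)) ^ (p / (p - 2)) = ‖f x‖ ^ p := by
    rw [← Real.rpow_mul (norm_nonneg _), mul_div_cancel₀ _ (by linarith)]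
  have rpow_g (x) : (‖g x‖ ^ 2) ^ (p / 2) = ‖g x‖ ^ p := by
    rw [← Real.rpow_natCast_mul (norm_nonneg _), Nat.cast_ofNat, mul_div_cancel₀ _ two_ne_zero]
  have hf : 0 ≤ 𝔼 x, ‖f x‖ ^ p := Finset.expect_nonneg fun _ _ => by positivity
  have hg : 0 ≤ 𝔼 x, ‖g x‖ ^ p := Finset.expect_nonneg fun _ _ => by positivity
  refine (expect_mul_le_rpow_mul_rpow _ hconj (fun _ _ => by positivity)
    (fun _ _ => by positivity)).trans_eq ?_
  simp_rw [rpow_f, rpow_g]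
  rw [lpNorm_eq_expect, lpNorm_eq_expect, ← Real.rpow_mul hf, ← Real.rpow_mul_natCast hg]
  congr 2 <;> push_cast <;> field_simp

end LpNorm

section Noise

variable {n : ℕ}

lemma sgn_mul_self (b : Bool) : sgn b * sgn b = 1 := by cases b <;> simp [sgn]

lemma sgn_not (b : Bool) : sgn (!b) = -sgn b := by cases b <;> simp [sgn]

/-- The reflection of the cube that changes the sign of the `i`-th coordinate. -/
def flipAt (i : Fin n) : Equiv.Perm (Fin n → Bool) :=
  Function.Involutive.toPerm (fun x => Function.update x i (!(x i))) fun x => by simp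

lemma flipAt_apply (i : Fin n) (x : Fin n → Bool) :
    flipAt i x = Function.update x i (!(x i)) := rfl

lemma flipAt_flipAt (i : Fin n) (x : Fin n → Bool) : flipAt i (flipAt i x) = x := by
  simp [flipAt_apply]

lemma flipAt_apply_self (i : Fin n) (x : Fin n → Bool) : flipAt i x i = !(x i) := by
  simp [flipAt_apply]

lemma flipAt_apply_of_ne {i j : Fin n} (h : j ≠ i) (x : Fin n → Bool) : flipAt i x j = x j := by
  simp [flipAt_apply, h]

lemma walsh_flipAt (i : Fin n) (A : Finset (Fin n)) (x : Fin n → Bool) :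
    walsh A (flipAt i x) = (if i ∈ A then -1 else 1) * walsh A x := by
  have prod_eq (B : Finset (Fin n)) (hB : i ∉ B) :
      ∏ j ∈ B, sgn (flipAt i x j) = ∏ j ∈ B, sgn (x j) :=
    Finset.prod_congr rfl fun j hj => by rw [flipAt_apply_of_ne (ne_of_mem_of_not_mem hj hB)]
  simp only [walsh]
  split_ifs with h
  · rw [← Finset.mul_prod_erase _ _ h, ← Finset.mul_prod_erase A (fun j => sgn (x j)) h,
      prod_eq _ (Finset.notMem_erase i A), flipAt_apply_self, sgn_not]
    ring
  · rw [one_mul, prod_eq A h]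

/-- The kernel of the noise operator: the probability of the point `y` when every coordinate of
`x` is independently kept with probability `(1 + ρ) / 2` and flipped otherwise. -/
def noiseKernel (ρ : ℝ) (x y : Fin n → Bool) : ℝ := ∏ i, (1 + ρ * (sgn (x i) * sgn (y i))) / 2

/-- The noise operator `T_ρ f = ∑_A ρ ^ |A| f̂(A) w_A`, given by its kernel so that it makes sense
for functions with values in any real module. The heat semigroup is `t ↦ T_{exp (-t)}`. -/
def noise {E : Type*} [AddCommGroup E] [Module ℝ E] (ρ : ℝ) (f : (Fin n → Bool) → E) :
    (Fin n → Bool) → E :=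
  fun x => ∑ y, noiseKernel ρ x y • f y

section Kernel

variable (ρ : ℝ) (x y : Fin n → Bool)

lemma noiseKernel_comm : noiseKernel ρ x y = noiseKernel ρ y x := by
  simp only [noiseKernel, mul_comm (sgn (x _))]

variable {ρ} in
lemma noiseKernel_nonneg (hρ : ρ ∈ Set.Icc (0 : ℝ) 1) : 0 ≤ noiseKernel ρ x y := by
  obtain ⟨h0, h1⟩ := hρ
  refine Finset.prod_nonneg fun i _ => ?_
  cases x i <;> cases y i <;> simp [sgn] <;> linarith

lemma noiseKernel_flipAt_flipAt (i : Fin n) :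
    noiseKernel ρ (flipAt i x) (flipAt i y) = noiseKernel ρ x y := by
  refine Finset.prod_congr rfl fun j _ => ?_
  obtain rfl | h := eq_or_ne j i
  · rw [flipAt_apply_self, flipAt_apply_self, sgn_not, sgn_not, neg_mul_neg]
  · rw [flipAt_apply_of_ne h, flipAt_apply_of_ne h]

lemma noiseKernel_eq_sum_walsh : noiseKernel ρ x y =
    (2 ^ n : ℝ)⁻¹ * ∑ A : Finset (Fin n), ρ ^ A.card * walsh A x * walsh A y := by
  rw [noiseKernel, Finset.prod_div_distrib, Finset.prod_one_add, Finset.prod_const,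
    Finset.card_univ, Fintype.card_fin, div_eq_inv_mul, Finset.powerset_univ]
  simp only [Finset.prod_mul_distrib, Finset.prod_const, walsh, mul_assoc]

lemma noiseKernel_one : noiseKernel 1 x y = if x = y then 1 else 0 := by
  split_ifs with h
  · subst h
    exact Finset.prod_eq_one fun i _ => by rw [sgn_mul_self]; norm_num
  · obtain ⟨i, hi⟩ := Function.ne_iff.1 h
    refine Finset.prod_eq_zero (Finset.mem_univ i) ?_
    revert hi
    cases x i <;> cases y i <;> simp [sgn]

lemma sum_noiseKernel_mul_walsh (A : Finset (Fin n)) :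
    ∑ y, noiseKernel ρ x y * walsh A y = ρ ^ A.card * walsh A x := by
  have walsh_eq (z : Fin n → Bool) : walsh A z = ∏ i, if i ∈ A then sgn (z i) else 1 := by
    rw [walsh, Finset.prod_ite_mem, Finset.univ_inter]
  have pow_eq : ρ ^ A.card = ∏ i, if i ∈ A then ρ else 1 := by
    rw [Finset.prod_ite_mem, Finset.univ_inter, Finset.prod_const]
  simp only [walsh_eq, pow_eq, noiseKernel, ← Finset.prod_mul_distrib]
  rw [← Fintype.prod_sum
    fun i b => (1 + ρ * (sgn (x i) * sgn b)) / 2 * (if i ∈ A then sgn b else 1)]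
  refine Finset.prod_congr rfl fun i _ => ?_
  rw [Fintype.sum_bool]
  split_ifs <;> cases x i <;> simp only [sgn, if_true, Bool.false_eq_true, if_false] <;> ring

lemma sum_noiseKernel : ∑ y, noiseKernel ρ x y = 1 := by
  simpa [walsh] using sum_noiseKernel_mul_walsh ρ x ∅

end Kernel

section Operator

variable {E : Type*} [AddCommGroup E] [Module ℝ E] (ρ : ℝ) (f : (Fin n → Bool) → E)

lemma noise_one : noise 1 f = f := by
  ext x
  simp [noise, noiseKernel_one]

lemma noise_flipAt (i : Fin n) (x : Fin n → Bool) :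
    noise ρ f (flipAt i x) = noise ρ (fun y => f (flipAt i y)) x := by
  simp only [noise]
  rw [← Equiv.sum_comp (flipAt i)]
  simp_rw [noiseKernel_flipAt_flipAt]

end Operator

section Contraction

variable {ρ s : ℝ}

lemma expect_noise (ρ : ℝ) (u : (Fin n → Bool) → ℝ) : 𝔼 x, noise ρ u x = 𝔼 x, u x := by
  have sum_kernel (y : Fin n → Bool) : ∑ x, noiseKernel ρ x y = 1 := by
    simp_rw [noiseKernel_comm ρ _ y, sum_noiseKernel]
  simp only [noise, Fintype.expect_eq_sum_div_card, smul_eq_mul]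
  rw [Finset.sum_comm]
  simp_rw [← Finset.sum_mul, sum_kernel, one_mul]

lemma noise_rpow_le (hρ : ρ ∈ Set.Icc (0 : ℝ) 1) (hs : 1 ≤ s) {u : (Fin n → Bool) → ℝ}
    (hu : ∀ x, 0 ≤ u x) (x : Fin n → Bool) :
    noise ρ u x ^ s ≤ noise ρ (fun y => u y ^ s) x :=
  Real.rpow_arith_mean_le_arith_mean_rpow _ _ _ (fun y _ => noiseKernel_nonneg x y hρ)
    (sum_noiseKernel ρ x) (fun y _ => hu y) hs

variable {Y Z : Type*} [NormedAddCommGroup Y] [NormedAddCommGroup Z]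

lemma lpNorm_le_of_rpow_le_noise (hs : 0 ≤ s) {F : (Fin n → Bool) → Z}
    {g : (Fin n → Bool) → Y} (h : ∀ x, ‖F x‖ ^ s ≤ noise ρ (fun y => ‖g y‖ ^ s) x) :
    lpNorm s F ≤ lpNorm s g :=
  lpNorm_le_lpNorm_of_expect_le hs <|
    (Finset.expect_le_expect fun x _ => h x).trans_eq (expect_noise ρ _)

lemma lpNorm_noise_le [NormedSpace ℝ Y] (hρ : ρ ∈ Set.Icc (0 : ℝ) 1) (hs : 1 ≤ s)
    (f : (Fin n → Bool) → Y) : lpNorm s (noise ρ f) ≤ lpNorm s f := by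
  refine lpNorm_le_of_rpow_le_noise (ρ := ρ) (zero_le_one.trans hs) fun x => ?_
  have norm_le : ‖noise ρ f x‖ ≤ noise ρ (fun y => ‖f y‖) x := by
    refine (norm_sum_le _ _).trans_eq (Finset.sum_congr rfl fun y _ => ?_)
    rw [norm_smul, Real.norm_of_nonneg (noiseKernel_nonneg x y hρ), smul_eq_mul]
  exact (Real.rpow_le_rpow (norm_nonneg _) norm_le (zero_le_one.trans hs)).trans
    (noise_rpow_le hρ hs (fun y => norm_nonneg (f y)) x)

end Contraction

end Noise
section Bessel

open scoped InnerProductSpace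

variable {ι κ E : Type*} [Fintype ι] [DecidableEq ι] [Fintype κ] [NormedAddCommGroup E]
  [InnerProductSpace ℝ E] {w : κ → ℝ} {η : ι → κ → ℝ} {s : ℝ}

lemma sum_mul_norm_sum_smul_sq
    (horth : ∀ i j, ∑ y, w y * (η i y * η j y) = if i = j then s else 0) (a : ι → E) :
    ∑ y, w y * ‖∑ i, η i y • a i‖ ^ 2 = s * ∑ i, ‖a i‖ ^ 2 :=
  calc ∑ y, w y * ‖∑ i, η i y • a i‖ ^ 2
      = ∑ y, ∑ i, ∑ j, w y * (η i y * η j y) * ⟪a j, a i⟫_ℝ := by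
        simp_rw [← real_inner_self_eq_norm_sq, sum_inner, inner_sum, real_inner_smul_left,
          real_inner_smul_right, Finset.mul_sum]
        refine Finset.sum_congr rfl fun y _ => ?_
        rw [Finset.sum_comm]
        refine Finset.sum_congr rfl fun i _ => Finset.sum_congr rfl fun j _ => ?_
        ring
    _ = ∑ i, ∑ j, (∑ y, w y * (η i y * η j y)) * ⟪a j, a i⟫_ℝ := by
        simp_rw [Finset.sum_mul]
        rw [Finset.sum_comm]
        exact Finset.sum_congr rfl fun i _ => Finset.sum_comm
    _ = s * ∑ i, ‖a i‖ ^ 2 := by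
        simp [horth, Finset.mul_sum]

lemma sum_norm_sq_sum_smul_le (hw : ∀ y, 0 ≤ w y) (hs : 0 < s)
    (horth : ∀ i j, ∑ y, w y * (η i y * η j y) = if i = j then s else 0) (g : κ → E) :
    ∑ i, ‖∑ y, (w y * η i y) • g y‖ ^ 2 ≤ s * ∑ y, w y * ‖g y‖ ^ 2 := by
  let a (i : ι) : E := ∑ y, (w y * η i y) • g y
  let v (y : κ) : E := ∑ i, η i y • a i
  have inner_v : ∑ y, w y * ⟪g y, v y⟫_ℝ = ∑ i, ‖a i‖ ^ 2 := by
    have inner_a (i : ι) : ‖a i‖ ^ 2 = ∑ y, w y * η i y * ⟪g y, a i⟫_ℝ := by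
      rw [← real_inner_self_eq_norm_sq]
      nth_rw 1 [show a i = ∑ y, (w y * η i y) • g y from rfl]
      simp_rw [sum_inner, real_inner_smul_left]
    simp_rw [inner_a, v, inner_sum, real_inner_smul_right, Finset.mul_sum, mul_assoc]
    exact Finset.sum_comm
  have norm_v : ∑ y, w y * ‖v y‖ ^ 2 = s * ∑ i, ‖a i‖ ^ 2 :=
    sum_mul_norm_sum_smul_sq horth a
  have expand : ∑ y, w y * ‖s • g y - v y‖ ^ 2 =
      s * (s * ∑ y, w y * ‖g y‖ ^ 2 - ∑ i, ‖a i‖ ^ 2) := by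
    have h (y : κ) : w y * ‖s • g y - v y‖ ^ 2 =
        s ^ 2 * (w y * ‖g y‖ ^ 2) - 2 * s * (w y * ⟪g y, v y⟫_ℝ) + w y * ‖v y‖ ^ 2 := by
      rw [norm_sub_sq_real, norm_smul, real_inner_smul_left, Real.norm_of_nonneg hs.le]
      ring
    simp_rw [h, Finset.sum_add_distrib, Finset.sum_sub_distrib, ← Finset.mul_sum, inner_v, norm_v]
    ring
  have nonneg : 0 ≤ ∑ y, w y * ‖s • g y - v y‖ ^ 2 :=
    Finset.sum_nonneg fun y _ => mul_nonneg (hw y) (sq_nonneg _)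
  rw [expand] at nonneg
  exact sub_nonneg.1 (nonneg_of_mul_nonneg_right nonneg hs)

end Bessel

section DualityMap

open scoped InnerProductSpace

/-- The duality map `z ↦ ‖z‖ ^ (p - 2) • z`, without the normalization that would make it map
`L_p` isometrically. Composition with it sends `f` to the functional on `L_p` that norms `f`. -/
def dualityMap {E : Type*} [NormedAddCommGroup E] [NormedSpace ℝ E] (p : ℝ) (z : E) : E :=
  ‖z‖ ^ (p - 2) • z

section NormedSpace

variable {E : Type*} [NormedAddCommGroup E] [NormedSpace ℝ E] {p q : ℝ}

lemma norm_dualityMap (hp : 1 < p) (z : E) : ‖dualityMap p z‖ = ‖z‖ ^ (p - 1) := by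
  rw [dualityMap, norm_smul, Real.norm_of_nonneg (by positivity),
    ← Real.rpow_add_one' (norm_nonneg z) (by linarith)]
  ring_nf

lemma lpNorm_dualityMap_comp {n : ℕ} (hpq : p.HolderConjugate q) (f : (Fin n → Bool) → E) :
    lpNorm q (dualityMap p ∘ f) = lpNorm p f ^ (p - 1) := by
  have rpow_q (x) : ‖(dualityMap p ∘ f) x‖ ^ q = ‖f x‖ ^ p := by
    rw [Function.comp_apply, norm_dualityMap hpq.lt, ← Real.rpow_mul (norm_nonneg _),
      hpq.sub_one_mul_conj]
  rw [lpNorm_eq_expect, lpNorm_eq_expect,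
    ← Real.rpow_mul (Finset.expect_nonneg fun _ _ => by positivity)]
  simp_rw [rpow_q]
  congr 1
  rw [one_div_mul_eq_div, div_eq_div_iff hpq.symm.ne_zero hpq.ne_zero, hpq.sub_one_mul_conj,
    one_mul]

lemma norm_dualityMap_sub_le_of_norm_le (hp : 2 ≤ p) {a b : E} (hab : ‖b‖ ≤ ‖a‖) :
    ‖dualityMap p a - dualityMap p b‖ ≤ p * ‖a‖ ^ (p - 2) * ‖a - b‖ := by
  rcases (norm_nonneg a).eq_or_lt with h | h
  · obtain rfl : b = 0 := norm_le_zero_iff.1 (hab.trans_eq h.symm)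
    obtain rfl : a = 0 := norm_eq_zero.1 h.symm
    simp
  have rpow_le : ‖b‖ ^ (p - 2) ≤ ‖a‖ ^ (p - 2) :=
    Real.rpow_le_rpow (norm_nonneg _) hab (by linarith)
  have bernoulli : ‖a‖ ^ (p - 2) * ‖a‖ - (p - 1) * (‖a‖ ^ (p - 2) * (‖a‖ - ‖b‖)) ≤
      ‖b‖ ^ (p - 2) * ‖b‖ := by
    have hratio : 0 ≤ ‖b‖ / ‖a‖ := by positivity
    have := one_add_mul_self_le_rpow_one_add (s := ‖b‖ / ‖a‖ - 1) (by linarith)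
      (p := p - 2 + 1) (by linarith)
    rw [add_sub_cancel, Real.div_rpow (norm_nonneg _) h.le, le_div_iff₀ (by positivity),
      Real.rpow_add_one h.ne', Real.rpow_add_one' (norm_nonneg _) (by linarith)] at this
    refine le_trans (le_of_eq ?_) this
    field_simp
    ring
  have split : dualityMap p a - dualityMap p b =
      ‖a‖ ^ (p - 2) • (a - b) + (‖a‖ ^ (p - 2) - ‖b‖ ^ (p - 2)) • b := by
    simp only [dualityMap]
    module
  calc ‖dualityMap p a - dualityMap p b‖
      ≤ ‖a‖ ^ (p - 2) * ‖a - b‖ + (‖a‖ ^ (p - 2) - ‖b‖ ^ (p - 2)) * ‖b‖ := by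
        rw [split]
        refine (norm_add_le _ _).trans_eq ?_
        rw [norm_smul, norm_smul, Real.norm_of_nonneg (by positivity),
          Real.norm_of_nonneg (sub_nonneg.2 rpow_le)]
    _ ≤ ‖a‖ ^ (p - 2) * ‖a - b‖ + (p - 1) * (‖a‖ ^ (p - 2) * (‖a‖ - ‖b‖)) := by
        linarith [mul_le_mul_of_nonneg_right rpow_le (norm_nonneg a),
          mul_le_mul_of_nonneg_left hab (Real.rpow_nonneg (norm_nonneg a) (p - 2))]
    _ ≤ ‖a‖ ^ (p - 2) * ‖a - b‖ + (p - 1) * (‖a‖ ^ (p - 2) * ‖a - b‖) := by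
        have : 0 ≤ p - 1 := by linarith
        gcongr
        exact norm_sub_norm_le a b
    _ = p * ‖a‖ ^ (p - 2) * ‖a - b‖ := by ring

lemma norm_dualityMap_sub_le (hp : 2 ≤ p) (a b : E) :
    ‖dualityMap p a - dualityMap p b‖ ≤ p * (‖a‖ ^ (p - 2) + ‖b‖ ^ (p - 2)) * ‖a - b‖ := by
  have ha : 0 ≤ ‖a‖ ^ (p - 2) := by positivity
  have hb : 0 ≤ ‖b‖ ^ (p - 2) := by positivity
  rcases le_total ‖b‖ ‖a‖ with h | h
  · refine (norm_dualityMap_sub_le_of_norm_le hp h).trans ?_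
    gcongr
    exact le_add_of_nonneg_right hb
  · rw [norm_sub_rev, norm_sub_rev a b]
    refine (norm_dualityMap_sub_le_of_norm_le hp h).trans ?_
    gcongr
    exact le_add_of_nonneg_left ha

end NormedSpace

lemma inner_dualityMap_self {E : Type*} [NormedAddCommGroup E] [InnerProductSpace ℝ E] {p : ℝ}
    (hp : 1 < p) (z : E) : ⟪dualityMap p z, z⟫_ℝ = ‖z‖ ^ p := by
  rw [dualityMap, real_inner_smul_left, real_inner_self_eq_norm_sq,
    ← Real.rpow_add_natCast' (norm_nonneg z) (by push_cast; linarith), Nat.cast_ofNat,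
    sub_add_cancel]

end DualityMap

section Gradient

variable {n : ℕ}

/-- The gradient as a function with values in the `ℓ²` sum of `n` copies of the range. -/
def grad (f : (Fin n → Bool) → X) : (Fin n → Bool) → PiLp 2 fun _ : Fin n => X :=
  fun x => WithLp.toLp 2 fun i => pderiv i f x

variable (ρ : ℝ) (i : Fin n) (f : (Fin n → Bool) → X) (x : Fin n → Bool)

lemma norm_grad_sq : ‖grad f x‖ ^ 2 = ∑ i, ‖pderiv i f x‖ ^ 2 :=
  PiLp.norm_sq_eq_of_L2 _ _

lemma lpNorm_grad (p : ℝ) :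
    lpNorm p (grad f) = lpNorm p fun x => √(∑ i, ‖pderiv i f x‖ ^ 2) :=
  lpNorm_congr_norm (fun x => by
    rw [Real.norm_of_nonneg (Real.sqrt_nonneg _), ← norm_grad_sq, Real.sqrt_sq (norm_nonneg _)]) p

lemma pderiv_apply : pderiv i f x = (2 : ℝ)⁻¹ • (f x - f (flipAt i x)) := rfl

lemma norm_pderiv_flipAt : ‖pderiv i f (flipAt i x)‖ = ‖pderiv i f x‖ := by
  rw [pderiv_apply, pderiv_apply, flipAt_flipAt, norm_smul, norm_smul, norm_sub_rev]

lemma pderiv_noise : pderiv i (noise ρ f) = noise ρ (pderiv i f) := by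
  ext x
  rw [pderiv_apply, noise_flipAt]
  simp only [pderiv_apply, noise, ← Finset.sum_sub_distrib, Finset.smul_sum, smul_sub,
    smul_comm (2 : ℝ)⁻¹]

lemma grad_noise : grad (noise ρ f) = noise ρ (grad f) := by
  ext x i
  simp [grad, noise, pderiv_noise]

lemma coeff_pderiv (A : Finset (Fin n)) :
    coeff (pderiv i f) A = if i ∈ A then coeff f A else 0 := by
  have sum_flip : ∑ x, walsh A x • f (flipAt i x) =
      (if i ∈ A then -1 else 1 : ℝ) • ∑ x, walsh A x • f x := by
    rw [← Equiv.sum_comp (flipAt i)]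
    simp_rw [flipAt_flipAt, walsh_flipAt, mul_smul, Finset.smul_sum]
  have sum_pderiv : ∑ x, walsh A x • pderiv i f x =
      (2 : ℝ)⁻¹ • (∑ x, walsh A x • f x - ∑ x, walsh A x • f (flipAt i x)) := by
    simp only [pderiv_apply, smul_comm _ (2 : ℝ)⁻¹, smul_sub, Finset.smul_sum,
      Finset.sum_sub_distrib]
  rw [coeff, coeff, sum_pderiv, sum_flip]
  split_ifs
  · module
  · rw [one_smul, sub_self, smul_zero, smul_zero]

lemma noise_eq_sum_walsh :
    noise ρ f x = ∑ A : Finset (Fin n), (ρ ^ A.card * walsh A x) • coeff f A := by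
  simp only [noise, coeff, noiseKernel_eq_sum_walsh, Finset.mul_sum, Finset.sum_smul,
    Finset.smul_sum]
  rw [Finset.sum_comm]
  refine Finset.sum_congr rfl fun A _ => Finset.sum_congr rfl fun y _ => ?_
  module

lemma lpNorm_grad_noise_le {ρ : ℝ} (hρ : ρ ∈ Set.Icc (0 : ℝ) 1) {p : ℝ} (hp : 1 ≤ p) :
    lpNorm p (grad (noise ρ f)) ≤ lpNorm p (grad f) := by
  rw [grad_noise]
  exact lpNorm_noise_le hρ hp _

/-- The `i`-th coordinate of `y` seen from `x`, centred so that it has mean zero for the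
probability weights `noiseKernel ρ x`. -/
def centredCoord (ρ : ℝ) (x : Fin n → Bool) (i : Fin n) (y : Fin n → Bool) : ℝ :=
  sgn (x i) * sgn (y i) - ρ

lemma noiseKernel_sub_noiseKernel_flipAt (y : Fin n → Bool) :
    (1 - ρ ^ 2) * (2⁻¹ * (noiseKernel ρ x y - noiseKernel ρ (flipAt i x) y)) =
      ρ * (noiseKernel ρ x y * centredCoord ρ x i y) := by
  have hprod : ∏ j ∈ Finset.univ.erase i, (1 + ρ * (sgn (flipAt i x j) * sgn (y j))) / 2 =
      ∏ j ∈ Finset.univ.erase i, (1 + ρ * (sgn (x j) * sgn (y j))) / 2 :=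
    Finset.prod_congr rfl fun j hj => by rw [flipAt_apply_of_ne (Finset.ne_of_mem_erase hj)]
  simp only [noiseKernel, centredCoord, ← Finset.mul_prod_erase _ _ (Finset.mem_univ i), hprod,
    flipAt_apply_self, sgn_not]
  linear_combination (-(ρ ^ 2 / 2) * ∏ j ∈ Finset.univ.erase i,
    (1 + ρ * (sgn (x j) * sgn (y j))) / 2) *
      (sgn (y i) * sgn (y i) * sgn_mul_self (x i) + sgn_mul_self (y i))

lemma sum_noiseKernel_mul_centredCoord_mul (j : Fin n) :
    ∑ y, noiseKernel ρ x y * (centredCoord ρ x i y * centredCoord ρ x j y) =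
      if i = j then 1 - ρ ^ 2 else 0 := by
  have first_moment (k : Fin n) : ∑ y, noiseKernel ρ x y * (sgn (x k) * sgn (y k)) = ρ := by
    have h := sum_noiseKernel_mul_walsh ρ x {k}
    simp only [walsh, Finset.prod_singleton, Finset.card_singleton, pow_one] at h
    simp_rw [mul_left_comm _ (sgn (x k))]
    rw [← Finset.mul_sum, h, mul_left_comm, sgn_mul_self, mul_one]
  have second_moment : ∑ y, noiseKernel ρ x y * ((sgn (x i) * sgn (y i)) * (sgn (x j) * sgn (y j)))
      = if i = j then 1 else ρ ^ 2 := by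
    split_ifs with hij
    · subst hij
      simp_rw [mul_mul_mul_comm (sgn (x i)), sgn_mul_self, mul_one, sum_noiseKernel]
    · have h := sum_noiseKernel_mul_walsh ρ x {i, j}
      simp only [walsh, Finset.prod_pair hij, Finset.card_pair hij] at h
      simp_rw [mul_mul_mul_comm (sgn (x i)), mul_left_comm _ (sgn (x i) * sgn (x j))]
      rw [← Finset.mul_sum, h, mul_left_comm, mul_mul_mul_comm, sgn_mul_self, sgn_mul_self,
        mul_one, mul_one]
  have expand (y : Fin n → Bool) :
      noiseKernel ρ x y * (centredCoord ρ x i y * centredCoord ρ x j y) =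
        noiseKernel ρ x y * ((sgn (x i) * sgn (y i)) * (sgn (x j) * sgn (y j)))
        - ρ * (noiseKernel ρ x y * (sgn (x i) * sgn (y i)))
        - ρ * (noiseKernel ρ x y * (sgn (x j) * sgn (y j))) + ρ ^ 2 * noiseKernel ρ x y := by
    simp only [centredCoord]
    ring
  simp_rw [expand, Finset.sum_add_distrib, Finset.sum_sub_distrib, ← Finset.mul_sum,
    first_moment, second_moment, sum_noiseKernel]
  split_ifs <;> ring

lemma smul_pderiv_noise : (1 - ρ ^ 2) • pderiv i (noise ρ f) x =
    ρ • ∑ y, (noiseKernel ρ x y * centredCoord ρ x i y) • f y := by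
  rw [pderiv_apply]
  simp only [noise, ← Finset.sum_sub_distrib, Finset.smul_sum, ← sub_smul, smul_smul,
    ← noiseKernel_sub_noiseKernel_flipAt]

lemma sum_norm_pderiv_mul_norm_pderiv_le (g : (Fin n → Bool) → X) :
    ∑ i, ‖pderiv i f x‖ * ‖pderiv i g x‖ ≤ ‖grad f x‖ * ‖grad g x‖ := by
  refine (Real.sum_mul_le_sqrt_mul_sqrt _ _ _).trans_eq ?_
  rw [← norm_grad_sq, ← norm_grad_sq, Real.sqrt_sq (norm_nonneg _), Real.sqrt_sq (norm_nonneg _)]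

lemma norm_pderiv_dualityMap_comp_le {p : ℝ} (hp : 2 ≤ p) :
    ‖pderiv i (dualityMap p ∘ f) x‖ ≤
      p * (‖f x‖ ^ (p - 2) + ‖f (flipAt i x)‖ ^ (p - 2)) * ‖pderiv i f x‖ := by
  simp only [pderiv_apply, norm_smul, Function.comp_apply]
  rw [mul_left_comm]
  gcongr
  exact norm_dualityMap_sub_le hp _ _

end Gradient

section HilbertValued

open scoped InnerProductSpace

variable {n : ℕ} {H : Type*} [NormedAddCommGroup H] [InnerProductSpace ℂ H]

attribute [local instance] InnerProductSpace.complexToReal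

section DirichletForm

lemma inner_coeff (g : (Fin n → Bool) → H) (A : Finset (Fin n)) (v : H) :
    ⟪coeff g A, v⟫_ℝ = 𝔼 x, walsh A x * ⟪g x, v⟫_ℝ := by
  rw [coeff, real_inner_smul_left, sum_inner, Fintype.expect_eq_sum_div_card, div_eq_inv_mul]
  simp [real_inner_smul_left]

lemma expect_inner_noise (ρ : ℝ) (g f : (Fin n → Bool) → H) :
    𝔼 x, ⟪g x, noise ρ f x⟫_ℝ =
      ∑ A : Finset (Fin n), ρ ^ A.card * ⟪coeff g A, coeff f A⟫_ℝ := by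
  simp_rw [noise_eq_sum_walsh, inner_sum, real_inner_smul_right]
  rw [Finset.expect_sum_comm]
  refine Finset.sum_congr rfl fun A _ => ?_
  simp_rw [inner_coeff, Finset.mul_expect, mul_assoc]

/-- The Dirichlet form `𝔼 ⟪∇g, ∇f⟫` of the cube. It is `-d/dt` of `𝔼 ⟪g, T_{exp (-t)} f⟫` at
`t = 0`. -/
def dirichletForm (g f : (Fin n → Bool) → H) : ℝ := 𝔼 x, ∑ i, ⟪pderiv i g x, pderiv i f x⟫_ℝ

lemma dirichletForm_noise (ρ : ℝ) (g f : (Fin n → Bool) → H) :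
    dirichletForm g (noise ρ f) =
      ∑ A : Finset (Fin n), A.card * ρ ^ A.card * ⟪coeff g A, coeff f A⟫_ℝ := by
  simp_rw [dirichletForm, Finset.expect_sum_comm, pderiv_noise, expect_inner_noise, coeff_pderiv]
  rw [Finset.sum_comm]
  refine Finset.sum_congr rfl fun A _ => ?_
  calc ∑ i, ρ ^ A.card * ⟪if i ∈ A then coeff g A else 0, if i ∈ A then coeff f A else 0⟫_ℝ
      = ∑ i, if i ∈ A then ρ ^ A.card * ⟪coeff g A, coeff f A⟫_ℝ else 0 := by
        refine Finset.sum_congr rfl fun i _ => ?_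
        split_ifs
        · rfl
        · rw [inner_zero_left, mul_zero]
    _ = A.card * ρ ^ A.card * ⟪coeff g A, coeff f A⟫_ℝ := by
        rw [Finset.sum_ite_mem, Finset.univ_inter, Finset.sum_const, nsmul_eq_mul, mul_assoc]

lemma dirichletForm_noise_comm (ρ : ℝ) (g f : (Fin n → Bool) → H) :
    dirichletForm g (noise ρ f) = dirichletForm f (noise ρ g) := by
  simp only [dirichletForm_noise, real_inner_comm]

lemma hasDerivAt_expect_inner_noise (g f : (Fin n → Bool) → H) (t : ℝ) :
    HasDerivAt (fun t => 𝔼 x, ⟪g x, noise (Real.exp (-t)) f x⟫_ℝ)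
      (-dirichletForm g (noise (Real.exp (-t)) f)) t := by
  simp_rw [dirichletForm_noise, expect_inner_noise, ← Finset.sum_neg_distrib]
  refine HasDerivAt.fun_sum fun A _ => ?_
  have hpow : HasDerivAt (fun t : ℝ => Real.exp (-t) ^ A.card)
      (-(A.card * Real.exp (-t) ^ A.card)) t := by
    simp_rw [← Real.exp_nat_mul]
    convert ((hasDerivAt_neg t).const_mul (A.card : ℝ)).exp using 1
    ring
  exact (hpow.mul_const ⟪coeff g A, coeff f A⟫_ℝ).congr_deriv (by ring)

lemma abs_expect_inner_noise_exp_le_half {d m : ℕ} (hd : 1 ≤ d) (hm : 1 ≤ m)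
    {f : (Fin n → Bool) → H} (hdeg : degLE f (d + m)) (htail : tailSpace f d)
    {g : (Fin n → Bool) → H} {B : ℝ} (hB : 0 < B)
    (hbound : ∀ ρ ∈ Set.Icc (0 : ℝ) 1, |𝔼 x, ⟪g x, noise ρ f x⟫_ℝ| ≤ B) :
    |𝔼 x, ⟪g x, noise (Real.exp (-(5 * m / d))) f x⟫_ℝ| ≤ B / 2 := by
  let c (A : Finset (Fin n)) : ℝ := ⟪coeff g A, coeff f A⟫_ℝ
  let Q : Polynomial ℝ :=
    ∑ A : Finset (Fin n), Polynomial.C (c A) * Polynomial.X ^ (A.card - d)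
  have hQ : Q.natDegree ≤ m := by
    refine Polynomial.natDegree_sum_le_of_forall_le _ _ fun A _ => ?_
    rcases le_or_gt A.card (d + m) with hA | hA
    · exact (Polynomial.natDegree_C_mul_X_pow_le _ _).trans (by lia)
    · simp [c, hdeg A hA]
  have factor (ρ : ℝ) : 𝔼 x, ⟪g x, noise ρ f x⟫_ℝ = ρ ^ d * Q.eval ρ := by
    rw [expect_inner_noise, Polynomial.eval_finsetSum, Finset.mul_sum]
    refine Finset.sum_congr rfl fun A _ => ?_
    rw [Polynomial.eval_mul, Polynomial.eval_C, Polynomial.eval_pow, Polynomial.eval_X]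
    rcases lt_or_ge A.card d with hA | hA
    · simp [c, htail A hA]
    · rw [← pow_mul_pow_sub ρ hA]
      ring
  simp only [factor] at hbound ⊢
  exact abs_pow_mul_eval_exp_le_half hd hm hQ hB hbound

end DirichletForm

section GradientSmoothing

/- By `smul_pderiv_noise` the partial derivatives of `noise ρ g` at `x` are, up to a scalar, the
coefficients of `g` along the family `centredCoord ρ x i`, which is orthogonal in
`L²(noiseKernel ρ x)`: this is Bessel's inequality. -/
lemma norm_grad_noise_sq_le {ρ : ℝ} (hρ : ρ ∈ Set.Ico (0 : ℝ) 1) (g : (Fin n → Bool) → H)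
    (x : Fin n → Bool) :
    (1 - ρ ^ 2) * ‖grad (noise ρ g) x‖ ^ 2 ≤ ρ ^ 2 * noise ρ (fun y => ‖g y‖ ^ 2) x := by
  have hs : 0 < 1 - ρ ^ 2 := by nlinarith [hρ.1, hρ.2]
  have norm_sq (i : Fin n) : (1 - ρ ^ 2) ^ 2 * ‖pderiv i (noise ρ g) x‖ ^ 2 =
      ρ ^ 2 * ‖∑ y, (noiseKernel ρ x y * centredCoord ρ x i y) • g y‖ ^ 2 := by
    have h := congrArg (‖·‖ ^ 2) (smul_pderiv_noise ρ i g x)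
    simpa only [norm_smul, mul_pow, Real.norm_eq_abs, sq_abs] using h
  refine le_of_mul_le_mul_left ?_ hs
  calc (1 - ρ ^ 2) * ((1 - ρ ^ 2) * ‖grad (noise ρ g) x‖ ^ 2)
      = ρ ^ 2 * ∑ i, ‖∑ y, (noiseKernel ρ x y * centredCoord ρ x i y) • g y‖ ^ 2 := by
        rw [norm_grad_sq, ← mul_assoc, ← sq, Finset.mul_sum, Finset.mul_sum]
        exact Finset.sum_congr rfl fun i _ => norm_sq i
    _ ≤ ρ ^ 2 * ((1 - ρ ^ 2) * noise ρ (fun y => ‖g y‖ ^ 2) x) := by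
        gcongr
        exact sum_norm_sq_sum_smul_le (fun y => noiseKernel_nonneg x y ⟨hρ.1, hρ.2.le⟩) hs
          (sum_noiseKernel_mul_centredCoord_mul ρ · x ·) g
    _ = (1 - ρ ^ 2) * (ρ ^ 2 * noise ρ (fun y => ‖g y‖ ^ 2) x) := mul_left_comm _ _ _

lemma norm_grad_noise_exp_sq_le {t : ℝ} (ht : 0 < t) (g : (Fin n → Bool) → H)
    (x : Fin n → Bool) :
    2 * t * ‖grad (noise (Real.exp (-t)) g) x‖ ^ 2 ≤
      noise (Real.exp (-t)) (fun y => ‖g y‖ ^ 2) x := by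
  have hρ : Real.exp (-t) ∈ Set.Ico (0 : ℝ) 1 :=
    ⟨(Real.exp_pos _).le, Real.exp_lt_one_iff.2 (neg_neg_of_pos ht)⟩
  have two_mul_le : 2 * t * Real.exp (-t) ^ 2 ≤ 1 - Real.exp (-t) ^ 2 := by
    have hexp : Real.exp (2 * t) * Real.exp (-t) ^ 2 = 1 := by
      rw [← Real.exp_nat_mul, ← Real.exp_add, Real.exp_eq_one_iff]
      push_cast
      ring
    nlinarith [Real.add_one_le_exp (2 * t), sq_nonneg (Real.exp (-t))]
  have smoothing := norm_grad_noise_sq_le hρ g x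
  refine le_of_mul_le_mul_left ?_ (pow_pos (Real.exp_pos (-t)) 2)
  calc Real.exp (-t) ^ 2 * (2 * t * ‖grad (noise (Real.exp (-t)) g) x‖ ^ 2)
      = 2 * t * Real.exp (-t) ^ 2 * ‖grad (noise (Real.exp (-t)) g) x‖ ^ 2 := by ring
    _ ≤ (1 - Real.exp (-t) ^ 2) * ‖grad (noise (Real.exp (-t)) g) x‖ ^ 2 := by gcongr
    _ ≤ Real.exp (-t) ^ 2 * noise (Real.exp (-t)) (fun y => ‖g y‖ ^ 2) x := smoothing

lemma sqrt_mul_lpNorm_grad_noise_le {t : ℝ} (ht : 0 < t) {q : ℝ} (hq : 2 ≤ q)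
    (g : (Fin n → Bool) → H) :
    √(2 * t) * lpNorm q (grad (noise (Real.exp (-t)) g)) ≤ lpNorm q g := by
  have hρ : Real.exp (-t) ∈ Set.Icc (0 : ℝ) 1 :=
    ⟨(Real.exp_pos _).le, Real.exp_le_one_iff.2 (neg_nonpos_of_nonneg ht.le)⟩
  have sq_rpow_half {u : ℝ} (hu : 0 ≤ u) : (u ^ 2) ^ (q / 2) = u ^ q := by
    rw [← Real.rpow_natCast_mul hu, Nat.cast_ofNat, mul_div_cancel₀ _ two_ne_zero]
  rw [← abs_of_nonneg (Real.sqrt_nonneg (2 * t)), ← lpNorm_smul (by linarith)]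
  refine lpNorm_le_of_rpow_le_noise (ρ := Real.exp (-t)) (by linarith) fun x => ?_
  calc ‖√(2 * t) • grad (noise (Real.exp (-t)) g) x‖ ^ q
      = (2 * t * ‖grad (noise (Real.exp (-t)) g) x‖ ^ 2) ^ (q / 2) := by
        rw [← sq_rpow_half (norm_nonneg _), norm_smul, mul_pow,
          Real.norm_of_nonneg (Real.sqrt_nonneg _), Real.sq_sqrt (by positivity)]
    _ ≤ noise (Real.exp (-t)) (fun y => ‖g y‖ ^ 2) x ^ (q / 2) := by
        gcongr
        exact norm_grad_noise_exp_sq_le ht g x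
    _ ≤ noise (Real.exp (-t)) (fun y => (‖g y‖ ^ 2) ^ (q / 2)) x :=
        noise_rpow_le hρ (by linarith) (fun _ => by positivity) x
    _ = noise (Real.exp (-t)) (fun y => ‖g y‖ ^ q) x := by
        simp only [sq_rpow_half (norm_nonneg _)]

end GradientSmoothing

section DirichletFormBounds

lemma abs_expect_inner_le {p q : ℝ} (hpq : p.HolderConjugate q) (g f : (Fin n → Bool) → H) :
    |𝔼 x, ⟪g x, f x⟫_ℝ| ≤ lpNorm p g * lpNorm q f := by
  refine le_trans ?_ (expect_norm_mul_norm_le hpq g f)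
  refine (Finset.abs_expect_le _ _).trans (Finset.expect_le_expect fun x _ => ?_)
  exact abs_real_inner_le_norm _ _

lemma abs_expect_inner_dualityMap_noise_le {p : ℝ} (hp : 1 < p) {ρ : ℝ}
    (hρ : ρ ∈ Set.Icc (0 : ℝ) 1) (f : (Fin n → Bool) → H) :
    |𝔼 x, ⟪(dualityMap p ∘ f) x, noise ρ f x⟫_ℝ| ≤ lpNorm p f ^ p := by
  have hpq : p.HolderConjugate (p / (p - 1)) := Real.HolderConjugate.conjExponent hp
  calc |𝔼 x, ⟪(dualityMap p ∘ f) x, noise ρ f x⟫_ℝ|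
      ≤ lpNorm (p / (p - 1)) (dualityMap p ∘ f) * lpNorm p (noise ρ f) :=
        abs_expect_inner_le hpq.symm _ _
    _ ≤ lpNorm p f ^ (p - 1) * lpNorm p f := by
        rw [lpNorm_dualityMap_comp hpq]
        have := lpNorm_nonneg p f
        gcongr
        exact lpNorm_noise_le hρ hp.le f
    _ = lpNorm p f ^ p := by
        rw [← Real.rpow_add_one' (lpNorm_nonneg p f) (by linarith), sub_add_cancel]

lemma dirichletForm_le_lpNorm_grad_mul {p q : ℝ} (hpq : p.HolderConjugate q)
    (g f : (Fin n → Bool) → H) :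
    dirichletForm g f ≤ lpNorm p (grad g) * lpNorm q (grad f) :=
  (Finset.expect_le_expect fun x _ => (Finset.sum_le_sum fun _ _ => real_inner_le_norm _ _).trans
    (sum_norm_pderiv_mul_norm_pderiv_le g x f)).trans (expect_norm_mul_norm_le hpq _ _)

lemma sqrt_mul_dirichletForm_dualityMap_noise_le {p : ℝ} (hp : 1 < p) (hp2 : p ≤ 2)
    (f : (Fin n → Bool) → H) {t : ℝ} (ht : 0 < t) :
    √(2 * t) * dirichletForm (dualityMap p ∘ f) (noise (Real.exp (-t)) f) ≤
      lpNorm p (grad f) * lpNorm p f ^ (p - 1) := by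
  have hpq : p.HolderConjugate (p / (p - 1)) := Real.HolderConjugate.conjExponent hp
  have hq : 2 ≤ p / (p - 1) := by
    rw [le_div_iff₀ (by linarith)]
    linarith
  rw [dirichletForm_noise_comm]
  calc √(2 * t) * dirichletForm f (noise (Real.exp (-t)) (dualityMap p ∘ f))
      ≤ √(2 * t) * (lpNorm p (grad f) *
          lpNorm (p / (p - 1)) (grad (noise (Real.exp (-t)) (dualityMap p ∘ f)))) := by
        gcongr
        exact dirichletForm_le_lpNorm_grad_mul hpq _ _
    _ = lpNorm p (grad f) * (√(2 * t) *
          lpNorm (p / (p - 1)) (grad (noise (Real.exp (-t)) (dualityMap p ∘ f)))) :=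
        mul_left_comm _ _ _
    _ ≤ lpNorm p (grad f) * lpNorm (p / (p - 1)) (dualityMap p ∘ f) := by
        have := lpNorm_nonneg p (grad f)
        gcongr
        exact sqrt_mul_lpNorm_grad_noise_le ht hq _
    _ = lpNorm p (grad f) * lpNorm p f ^ (p - 1) := by rw [lpNorm_dualityMap_comp hpq]

lemma dirichletForm_dualityMap_le {p : ℝ} (hp : 2 ≤ p) (f g : (Fin n → Bool) → H) :
    dirichletForm (dualityMap p ∘ f) g ≤
      2 * p * 𝔼 x, ‖f x‖ ^ (p - 2) * (‖grad f x‖ * ‖grad g x‖) := by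
  let u (i : Fin n) (x : Fin n → Bool) : ℝ :=
    ‖f x‖ ^ (p - 2) * (‖pderiv i f x‖ * ‖pderiv i g x‖)
  have inner_le (i : Fin n) (x : Fin n → Bool) :
      ⟪pderiv i (dualityMap p ∘ f) x, pderiv i g x⟫_ℝ ≤ p * (u i x + u i (flipAt i x)) := by
    refine (real_inner_le_norm _ _).trans ((mul_le_mul_of_nonneg_right
      (norm_pderiv_dualityMap_comp_le i f x hp) (norm_nonneg _)).trans_eq ?_)
    simp only [u, norm_pderiv_flipAt]
    ring
  have expect_flip (i : Fin n) : 𝔼 x, u i (flipAt i x) = 𝔼 x, u i x :=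
    Fintype.expect_equiv (flipAt i) _ _ fun _ => rfl
  calc dirichletForm (dualityMap p ∘ f) g
      ≤ 𝔼 x, ∑ i, p * (u i x + u i (flipAt i x)) :=
        Finset.expect_le_expect fun x _ => Finset.sum_le_sum fun i _ => inner_le i x
    _ = 2 * p * 𝔼 x, ∑ i, u i x := by
        simp_rw [Finset.expect_sum_comm, ← Finset.mul_expect, Finset.expect_add_distrib,
          expect_flip, Finset.mul_sum]
        exact Finset.sum_congr rfl fun i _ => by ring
    _ ≤ 2 * p * 𝔼 x, ‖f x‖ ^ (p - 2) * (‖grad f x‖ * ‖grad g x‖) := by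
        simp only [u, ← Finset.mul_sum]
        gcongr with x
        exact sum_norm_pderiv_mul_norm_pderiv_le f x g

lemma dirichletForm_dualityMap_noise_le {p : ℝ} (hp : 2 < p) (f : (Fin n → Bool) → H) {ρ : ℝ}
    (hρ : ρ ∈ Set.Icc (0 : ℝ) 1) :
    dirichletForm (dualityMap p ∘ f) (noise ρ f) ≤
      2 * p * (lpNorm p f ^ (p - 2) * lpNorm p (grad f) ^ 2) := by
  let N := lpNorm p f
  let G := lpNorm p (grad f)
  have contraction : lpNorm p (grad (noise ρ f)) ≤ G := lpNorm_grad_noise_le f hρ (by linarith)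
  have hN : 0 ≤ N := lpNorm_nonneg p f
  calc dirichletForm (dualityMap p ∘ f) (noise ρ f)
      ≤ 2 * p * 𝔼 x, ‖f x‖ ^ (p - 2) * (‖grad f x‖ * ‖grad (noise ρ f) x‖) :=
        dirichletForm_dualityMap_le hp.le _ _
    _ ≤ 2 * p * 𝔼 x, (‖f x‖ ^ (p - 2) * ‖grad f x‖ ^ 2 +
          ‖f x‖ ^ (p - 2) * ‖grad (noise ρ f) x‖ ^ 2) / 2 := by
        gcongr with x
        rw [← mul_add, mul_div_assoc]
        gcongr
        linarith [two_mul_le_add_sq ‖grad f x‖ ‖grad (noise ρ f) x‖]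
    _ ≤ 2 * p * ((N ^ (p - 2) * G ^ 2 + N ^ (p - 2) * lpNorm p (grad (noise ρ f)) ^ 2) / 2) := by
        rw [← Finset.expect_div, Finset.expect_add_distrib]
        gcongr
        · exact expect_rpow_mul_sq_le hp _ _
        · exact expect_rpow_mul_sq_le hp _ _
    _ ≤ 2 * p * ((N ^ (p - 2) * G ^ 2 + N ^ (p - 2) * G ^ 2) / 2) := by
        gcongr
        exact lpNorm_nonneg _ _
    _ = 2 * p * (N ^ (p - 2) * G ^ 2) := by rw [add_self_div_two]

end DirichletFormBounds

section FlowComparison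

lemma lpNorm_rpow_half_le_of_dirichletForm_le {p : ℝ} (hp : 1 < p) {d m : ℕ} (hd : 1 ≤ d)
    (hm : 1 ≤ m) {f : (Fin n → Bool) → H} (hdeg : degLE f (d + m)) (htail : tailSpace f d)
    (hf : 0 < lpNorm p f) {φ φ' : ℝ → ℝ} (hcont : Continuous φ)
    (hderiv : ∀ t > 0, HasDerivAt φ (φ' t) t)
    (hle : ∀ t > 0, dirichletForm (dualityMap p ∘ f) (noise (Real.exp (-t)) f) ≤ φ' t) :
    lpNorm p f ^ p / 2 ≤ φ (5 * m / d) - φ 0 := by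
  let h (t : ℝ) : ℝ := 𝔼 x, ⟪(dualityMap p ∘ f) x, noise (Real.exp (-t)) f x⟫_ℝ
  have hasDerivAt_h (t : ℝ) : HasDerivAt h _ t :=
    hasDerivAt_expect_inner_noise (dualityMap p ∘ f) f t
  have h_zero : h 0 = lpNorm p f ^ p := by
    simp only [h, neg_zero, Real.exp_zero, noise_one, Function.comp_apply,
      inner_dualityMap_self hp, lpNorm_rpow (by linarith : p ≠ 0)]
  have h_half : h (5 * m / d) ≤ lpNorm p f ^ p / 2 :=
    (le_abs_self _).trans <| abs_expect_inner_noise_exp_le_half hd hm hdeg htail (by positivity)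
      fun ρ hρ => abs_expect_inner_dualityMap_noise_le hp hρ f
  have monotone : MonotoneOn (fun t => h t + φ t) (Set.Ici 0) := by
    have continuous_h : Continuous h :=
      continuous_iff_continuousAt.2 fun t => (hasDerivAt_h t).continuousAt
    refine monotoneOn_of_hasDerivWithinAt_nonneg (convex_Ici 0)
      (continuous_h.add hcont).continuousOn
      (fun t ht => ((hasDerivAt_h t).add (hderiv t ?_)).hasDerivWithinAt) fun t ht => ?_
    · rwa [interior_Ici] at ht
    · rw [interior_Ici] at ht
      linarith [hle t ht]
  have hT : (0 : ℝ) ≤ 5 * m / d := by positivity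
  linarith [monotone Set.self_mem_Ici hT hT]

lemma lpNorm_sq_le_of_le_two {p : ℝ} (hp : 1 < p) (hp2 : p ≤ 2) {d m : ℕ} (hd : 1 ≤ d)
    (hm : 1 ≤ m) {f : (Fin n → Bool) → H} (hdeg : degLE f (d + m)) (htail : tailSpace f d)
    (hf : 0 < lpNorm p f) : lpNorm p f ^ 2 ≤ 40 * (m / d) * lpNorm p (grad f) ^ 2 := by
  let N := lpNorm p f
  let G := lpNorm p (grad f)
  have flow : N ^ p / 2 ≤ G * N ^ (p - 1) * √(2 * (5 * m / d)) -
      G * N ^ (p - 1) * √(2 * 0) := by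
    refine lpNorm_rpow_half_le_of_dirichletForm_le hp hd hm hdeg htail hf
      (φ := fun t => G * N ^ (p - 1) * √(2 * t)) (φ' := fun t => G * N ^ (p - 1) / √(2 * t))
      (by fun_prop) (fun t ht => ?_) (fun t ht => ?_)
    · have hsqrt : HasDerivAt (fun t => √(2 * t)) (2 * 1 / (2 * √(2 * t))) t :=
        ((hasDerivAt_id t).const_mul 2).sqrt (by simpa using ht.ne')
      exact (hsqrt.const_mul (G * N ^ (p - 1))).congr_deriv (by field_simp)
    · rw [le_div_iff₀' (Real.sqrt_pos.2 (by simpa using ht))]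
      exact sqrt_mul_dirichletForm_dualityMap_noise_le hp hp2 f ht
  have bound : N ≤ 2 * √(10 * (m / d)) * G := by
    refine le_of_mul_le_mul_left ?_ (Real.rpow_pos_of_pos hf (p - 1))
    rw [← Real.rpow_add_one hf.ne', sub_add_cancel]
    rw [mul_zero, Real.sqrt_zero, mul_zero, sub_zero,
      show (2 : ℝ) * (5 * m / d) = 10 * (m / d) by ring] at flow
    linarith
  calc N ^ 2 ≤ (2 * √(10 * (m / d)) * G) ^ 2 := by gcongr
    _ = 40 * (m / d) * G ^ 2 := by
        rw [mul_pow, mul_pow, Real.sq_sqrt (by positivity)]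
        ring

lemma lpNorm_sq_le_of_two_lt {p : ℝ} (hp : 2 < p) {d m : ℕ} (hd : 1 ≤ d) (hm : 1 ≤ m)
    {f : (Fin n → Bool) → H} (hdeg : degLE f (d + m)) (htail : tailSpace f d)
    (hf : 0 < lpNorm p f) : lpNorm p f ^ 2 ≤ 20 * p * (m / d) * lpNorm p (grad f) ^ 2 := by
  let M := 2 * p * (lpNorm p f ^ (p - 2) * lpNorm p (grad f) ^ 2)
  have flow : lpNorm p f ^ p / 2 ≤ M * (5 * m / d) - M * 0 :=
    lpNorm_rpow_half_le_of_dirichletForm_le (by linarith) hd hm hdeg htail hf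
      (φ := fun t => M * t) (φ' := fun _ => M) (by fun_prop)
      (fun t _ => by simpa using (hasDerivAt_id t).const_mul M)
      (fun t ht => dirichletForm_dualityMap_noise_le hp f
        ⟨(Real.exp_pos _).le, Real.exp_le_one_iff.2 (neg_nonpos_of_nonneg ht.le)⟩)
  refine le_of_mul_le_mul_left ?_ (Real.rpow_pos_of_pos hf (p - 2))
  rw [← Real.rpow_add_natCast hf.ne', Nat.cast_ofNat, sub_add_cancel]
  calc lpNorm p f ^ p ≤ 2 * (M * (5 * m / d)) := by linarith
    _ = lpNorm p f ^ (p - 2) * (20 * p * (m / d) * lpNorm p (grad f) ^ 2) := by ring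

lemma lpNorm_sq_le {p : ℝ} (hp : 1 < p) {d m : ℕ} (hd : 1 ≤ d) (hm : 1 ≤ m)
    {f : (Fin n → Bool) → H} (hdeg : degLE f (d + m)) (htail : tailSpace f d) :
    lpNorm p f ^ 2 ≤ 20 * max p 2 * (m / d) * lpNorm p (grad f) ^ 2 := by
  rcases (lpNorm_nonneg p f).eq_or_lt with hf | hf
  · rw [← hf, zero_pow two_ne_zero]
    positivity
  rcases le_or_gt p 2 with hp2 | hp2
  · convert lpNorm_sq_le_of_le_two hp hp2 hd hm hdeg htail hf using 3
    rw [max_eq_right hp2]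
    norm_num
  · rw [max_eq_left hp2.le]
    exact lpNorm_sq_le_of_two_lt hp2 hd hm hdeg htail hf

end FlowComparison

end HilbertValued

theorem stmt16_general {n : ℕ} {H : Type*} [NormedAddCommGroup H] [InnerProductSpace ℂ H] {p : ℝ}
    (hp : 1 < p) {d m : ℕ} (hd : 1 ≤ d) (hm : 1 ≤ m) (f : (Fin n → Bool) → H)
    (hdeg : degLE f (d + m)) (htail : tailSpace f d) :
    (√(20 * max p 2))⁻¹ * √(d / m) * lpNorm p f ≤
      lpNorm p fun x => √(∑ i, ‖pderiv i f x‖ ^ 2) := by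
  rw [← lpNorm_grad]
  refine le_of_sq_le_sq ?_ (lpNorm_nonneg p _)
  rw [mul_pow, mul_pow, inv_pow, Real.sq_sqrt (by positivity), Real.sq_sqrt (by positivity)]
  calc (20 * max p 2)⁻¹ * (d / m) * lpNorm p f ^ 2
      ≤ (20 * max p 2)⁻¹ * (d / m) * (20 * max p 2 * (m / d) * lpNorm p (grad f) ^ 2) := by
        gcongr
        exact lpNorm_sq_le hp hd hm hdeg htail
    _ = lpNorm p (grad f) ^ 2 := by
        field_simp

/-- **Reverse Bernstein–Markov inequality for the scalar discrete gradient.** -/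
theorem stmt16 (p : ℝ) (hp : 1 < p) :
    ∃ c : ℝ, 0 < c ∧
      ∀ n d m : ℕ, 1 ≤ d → 1 ≤ m → d + m ≤ n →
        ∀ f : (Fin n → Bool) → ℂ, degLE f (d + m) → tailSpace f d →
          c * Real.sqrt ((d : ℝ) / (m : ℝ)) * lpNorm p f ≤ gradLpNorm p f :=
  ⟨(√(20 * max p 2))⁻¹, by positivity, fun _ _ _ hd hm _ f hdeg htail =>
    stmt16_general hp hd hm f hdeg htail⟩

end HammingCube
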